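/- (Solution 3A of Table 1.) Let a ∈ ℂ and let P(λ,t) = λ⁴ − 6λ²t + 4λt + 4λt² − 3t². Let U ⊆ ℂ be a nonempty open set and λ : U → ℂ a twice differentiable function such that for every t ∈ U one has t ∉ {0,1}, λ(t) ∉ {0,1,t}, P(λ(t),t) = 0, and ∂P/∂λ(λ(t),t) ≠ 0. Then λ is a solution of PVI_α with α = (a, 9a, a, a). -/

import Mathlib

/-- `l : ℂ → ℂ` (viewed as a function on `U`) is a solution of the Painlevé VI equation
`PVI_α` with parameter `α = (α₀, α₁, α₂, α₃)`:  `l` is twice differentiable on `U`, for every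
`t ∈ U` one has `t ∉ {0,1}`, `l t ∉ {0,1,t}`, and the Painlevé VI ODE holds on `U`. -/
def IsPVISolution (α : Fin 4 → ℂ) (U : Set ℂ) (l : ℂ → ℂ) : Prop :=
  (∀ t ∈ U, DifferentiableAt ℂ l t) ∧
  (∀ t ∈ U, DifferentiableAt ℂ (deriv l) t) ∧
  (∀ t ∈ U, t ≠ 0 ∧ t ≠ 1 ∧ l t ≠ 0 ∧ l t ≠ 1 ∧ l t ≠ t) ∧
  (∀ t ∈ U, deriv (deriv l) t =
    (1 / 2) * (1 / l t + 1 / (l t - 1) + 1 / (l t - t)) * (deriv l t) ^ 2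
      - (1 / t + 1 / (t - 1) + 1 / (l t - t)) * deriv l t
      + (l t * (l t - 1) * (l t - t)) / (t ^ 2 * (t - 1) ^ 2) *
        (α 0 - α 1 * t / (l t) ^ 2 + α 2 * (t - 1) / (l t - 1) ^ 2
          + (1 / 2 - α 3) * (t * (t - 1)) / (l t - t) ^ 2))

open Polynomial

/-- The polynomial `P(λ, t)` of the table, as a polynomial in `λ` (the variable `X`)
with coefficients depending on `t`. -/
noncomputable def P (t : ℂ) : Polynomial ℂ := X ^ 4 - C (6 * t) * X ^ 2 + C (4 * t) * X + C (4 * t ^ 2) * X - C (3 * t ^ 2)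

/-- A solution of `P(l, t) = 0` at a regular point satisfies a Riccati equation. -/
theorem riccati_of_quartic {U : Set ℂ} (hU : IsOpen U) {l : ℂ → ℂ}
    (hdiff : ∀ t ∈ U, DifferentiableAt ℂ l t)
    (heq : ∀ t ∈ U, l t ^ 4 - 6 * t * l t ^ 2 + 4 * t * l t + 4 * t ^ 2 * l t - 3 * t ^ 2 = 0)
    (hder : ∀ t ∈ U, 4 * l t ^ 3 - 12 * t * l t + 4 * t + 4 * t ^ 2 ≠ 0) {t : ℂ} (ht : t ∈ U) :
    6 * (t * (t - 1)) * deriv l t = l t ^ 2 + (4 * t - 2) * l t - 3 * t := by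
  have hl := (hdiff t ht).hasDerivAt
  have hid := hasDerivAt_id' t
  have hF := ((((hl.pow 4).sub ((hid.const_mul 6).mul (hl.pow 2))).add
    ((hid.const_mul 4).mul hl)).add (((hid.pow 2).const_mul 4).mul hl)).sub
    ((hid.pow 2).const_mul 3)
  have hzero := hF.unique ((hasDerivAt_const t (0 : ℂ)).congr_of_eventuallyEq (by
    filter_upwards [hU.mem_nhds ht] with s hs
    simpa using heq s hs))
  norm_num at hzero
  apply mul_left_cancel₀ (hder t ht)
  linear_combination (6 * (t * (t - 1))) * hzero - (4 * l t + 16 * t - 8) * heq t ht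

/-- Differentiating the Riccati equation gives the second derivative. -/
theorem deriv_deriv_of_riccati {U : Set ℂ} (hU : IsOpen U) {l : ℂ → ℂ}
    (hdiff : ∀ t ∈ U, DifferentiableAt ℂ l t)
    (hdiff2 : ∀ t ∈ U, DifferentiableAt ℂ (deriv l) t)
    (hric : ∀ t ∈ U,
      6 * (t * (t - 1)) * deriv l t = l t ^ 2 + (4 * t - 2) * l t - 3 * t)
    {t : ℂ} (ht : t ∈ U) :
    6 * (t * (t - 1)) * deriv (deriv l) t =
      (2 * l t - 8 * t + 4) * deriv l t + 4 * l t - 3 := by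
  have hl := (hdiff t ht).hasDerivAt
  have hl2 := (hdiff2 t ht).hasDerivAt
  have hid := hasDerivAt_id' t
  have hF := (((hid.mul (hid.sub_const 1)).const_mul 6).mul hl2).sub
    (((hl.pow 2).add (((hid.const_mul 4).sub_const 2).mul hl)).sub (hid.const_mul 3))
  have hzero := hF.unique ((hasDerivAt_const t (0 : ℂ)).congr_of_eventuallyEq (by
    filter_upwards [hU.mem_nhds ht] with s hs
    simpa [sub_eq_zero] using hric s hs))
  norm_num at hzero
  linear_combination hzero

/-- On the curve `P(x, t) = 0` the coefficient of `a` in the Painlevé equation vanishes. -/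
theorem painleve_coefficient_eq_zero {t x : ℂ} (hx0 : x ≠ 0) (hx1 : x ≠ 1) (hxt : x ≠ t)
    (hP : x ^ 4 - 6 * t * x ^ 2 + 4 * t * x + 4 * t ^ 2 * x - 3 * t ^ 2 = 0) :
    1 - 9 * t / x ^ 2 + (t - 1) / (x - 1) ^ 2 - t * (t - 1) / (x - t) ^ 2 = 0 := by
  have hx1' := sub_ne_zero.mpr hx1
  have hxt' := sub_ne_zero.mpr hxt
  field_simp
  linear_combination (x ^ 2 - (2 + 2 * t) * x + 3 * t) * hP

/-- The Painlevé equation with all parameters zero, for jets of the Riccati equation. -/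
theorem painleve_zero_of_riccati {t x y z : ℂ} (ht0 : t ≠ 0) (ht1 : t ≠ 1)
    (hx0 : x ≠ 0) (hx1 : x ≠ 1) (hxt : x ≠ t)
    (hP : x ^ 4 - 6 * t * x ^ 2 + 4 * t * x + 4 * t ^ 2 * x - 3 * t ^ 2 = 0)
    (hy : 6 * (t * (t - 1)) * y = x ^ 2 + (4 * t - 2) * x - 3 * t)
    (hz : 6 * (t * (t - 1)) * z = (2 * x - 8 * t + 4) * y + 4 * x - 3) :
    z = (1 / 2) * (1 / x + 1 / (x - 1) + 1 / (x - t)) * y ^ 2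
      - (1 / t + 1 / (t - 1) + 1 / (x - t)) * y
      + (x * (x - 1) * (x - t)) / (t ^ 2 * (t - 1) ^ 2) *
        ((1 / 2) * (t * (t - 1)) / (x - t) ^ 2) := by
  have ht1' := sub_ne_zero.mpr ht1
  have hx1' := sub_ne_zero.mpr hx1
  have hxt' := sub_ne_zero.mpr hxt
  have hT : 6 * (t * (t - 1)) ≠ 0 := by simp [ht0, ht1']
  rw [mul_comm, ← eq_div_iff hT] at hy hz
  subst hz
  subst hy
  field_simp
  linear_combination (x ^ 2 - (2 + 2 * t) * x + 3 * t) * hP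

theorem stmt6 (a : ℂ)
    (U : Set ℂ) (hU : U.Nonempty) (hUopen : IsOpen U) (l : ℂ → ℂ)
    (hdiff : ∀ t ∈ U, DifferentiableAt ℂ l t)
    (hdiff2 : ∀ t ∈ U, DifferentiableAt ℂ (deriv l) t)
    (hreg : ∀ t ∈ U, t ≠ 0 ∧ t ≠ 1 ∧ l t ≠ 0 ∧ l t ≠ 1 ∧ l t ≠ t)
    (heq : ∀ t ∈ U, (P t).eval (l t) = 0)
    (hder : ∀ t ∈ U, (Polynomial.derivative (P t)).eval (l t) ≠ 0) :
    IsPVISolution ![a, 9 * a, a, a] U l := by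
  have heq' : ∀ t ∈ U,
      l t ^ 4 - 6 * t * l t ^ 2 + 4 * t * l t + 4 * t ^ 2 * l t - 3 * t ^ 2 = 0 := by
    intro t ht
    simpa [P] using heq t ht
  have hder' : ∀ t ∈ U, 4 * l t ^ 3 - 12 * t * l t + 4 * t + 4 * t ^ 2 ≠ 0 := by
    intro t ht h
    apply hder t ht
    simp [P, -map_pow]
    linear_combination h
  have hric := fun t ht => riccati_of_quartic hUopen hdiff heq' hder' (t := t) ht
  refine ⟨hdiff, hdiff2, hreg, fun t ht => ?_⟩
  obtain ⟨ht0, ht1, hx0, hx1, hxt⟩ := hreg t ht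
  have hcoef := painleve_coefficient_eq_zero hx0 hx1 hxt (heq' t ht)
  have hzero := painleve_zero_of_riccati ht0 ht1 hx0 hx1 hxt (heq' t ht) (hric t ht)
    (deriv_deriv_of_riccati hUopen hdiff hdiff2 hric ht)
  simp only [Matrix.cons_val]
  linear_combination hzero -
    (l t * (l t - 1) * (l t - t)) / (t ^ 2 * (t - 1) ^ 2) * a * hcoef
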